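/- (Predictive-variance lower bound at the test input.) The Gaussian-process predictive variance at the test input satisfies σ²(w') ≥ τ² (1 − m · exp(−2 d_min(w')²) / λ_min(K)). -/

import Mathlib

open Matrix Real

lemma rayleigh_aux {m : ℕ} (K : Matrix (Fin m) (Fin m) ℝ) (hK : K.IsHermitian) (c : ℝ)
    (hc : ∀ i, c ≤ hK.eigenvalues i) (u : Fin m → ℝ) : c * (u ⬝ᵥ u) ≤ u ⬝ᵥ (K *ᵥ u) := by
  have h : (K - algebraMap ℝ _ c).PosSemidef := by
    rw [Matrix.posSemidef_iff_isHermitian_and_spectrum_nonneg]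
    refine ⟨hK.sub ?_, ?_⟩
    · simp [Matrix.IsHermitian, Matrix.algebraMap_eq_diagonal]
    · rw [← spectrum.sub_singleton_eq, hK.spectrum_real_eq_range_eigenvalues]
      rintro x hx
      obtain ⟨a, ⟨i, rfl⟩, b, rfl, rfl⟩ := hx
      simpa using hc i
  have h2 := h.dotProduct_mulVec_nonneg u
  simp only [star_trivial, Matrix.sub_mulVec, dotProduct_sub, Algebra.algebraMap_eq_smul_one,
    Matrix.smul_mulVec, Matrix.one_mulVec, dotProduct_smul, smul_eq_mul] at h2
  linarith

/-- **Predictive-variance lower bound at the test input.**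
`σ²(w') ≥ τ² (1 − m · exp(−2 d_min(w')²) / λ_min(K))`. -/
theorem gp_predictive_variance_lower_bound_test
    (p m : ℕ) (hp : 1 ≤ p) (hm : 1 ≤ m)
    (θ : Fin p → ℝ) (hθ : ∀ j, 0 < θ j)
    (τ2 : ℝ) (hτ2 : 0 < τ2)
    (w : Fin m → Fin p → ℝ)
    (K : Matrix (Fin m) (Fin m) ℝ)
    (hK : ∀ i j, K i j = Real.exp (-(∑ l, (w i l - w j l) ^ 2 / (θ l) ^ 2)))
    (hKpd : K.PosDef)
    (z : Fin m → ℝ)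
    (φ : (Fin p → ℝ) → Fin m → ℝ)
    (hφ : ∀ x i, φ x i = Real.exp (-(∑ l, (x l - w i l) ^ 2 / (θ l) ^ 2)))
    (σ2 : (Fin p → ℝ) → ℝ)
    (hσ2 : ∀ x, σ2 x = τ2 * (1 - φ x ⬝ᵥ (K⁻¹ *ᵥ φ x)))
    (lamMin : ℝ)
    (hlam : lamMin = ⨅ i, hKpd.1.eigenvalues i)
    (n : ℕ) (hn : 1 ≤ n)
    (v : Fin n → Fin p → ℝ)
    (w' : Fin p → ℝ)
    (dmin : ℝ)
    (hdmin : dmin = min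
      (⨅ i, Real.sqrt (∑ l, (w i l - w' l) ^ 2 / (θ l) ^ 2))
      (⨅ j, Real.sqrt (∑ l, (v j l - w' l) ^ 2 / (θ l) ^ 2))) :
    σ2 w' ≥ τ2 * (1 - (m : ℝ) * Real.exp (-2 * dmin ^ 2) / lamMin) := by
  haveI : Nonempty (Fin m) := ⟨⟨0, hm⟩⟩
  have hpos : 0 < lamMin := by
    obtain ⟨i, hi⟩ := exists_eq_ciInf_of_finite (f := hKpd.1.eigenvalues)
    rw [hlam, ← hi]
    exact hKpd.eigenvalues_pos i
  have hle : ∀ i, lamMin ≤ hKpd.1.eigenvalues i := fun i => by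
    rw [hlam]
    exact ciInf_le (Set.finite_range _).bddBelow i
  have hd0 : 0 ≤ dmin := by
    rw [hdmin]
    exact le_min (Real.iInf_nonneg fun i => Real.sqrt_nonneg _)
      (Real.iInf_nonneg fun i => Real.sqrt_nonneg _)
  have hφle : ∀ i, φ w' i * φ w' i ≤ Real.exp (-2 * dmin ^ 2) := by
    intro i
    have h1 : dmin ≤ Real.sqrt (∑ l, (w i l - w' l) ^ 2 / (θ l) ^ 2) := by
      rw [hdmin]
      exact (min_le_left _ _).trans (ciInf_le (Set.finite_range _).bddBelow i)
    have h2 : dmin ^ 2 ≤ ∑ l, (w i l - w' l) ^ 2 / (θ l) ^ 2 :=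
      (Real.le_sqrt (by assumption) (Finset.sum_nonneg fun l _ => by positivity)).1 h1
    have h3 : ∑ l, (w' l - w i l) ^ 2 / (θ l) ^ 2 = ∑ l, (w i l - w' l) ^ 2 / (θ l) ^ 2 :=
      Finset.sum_congr rfl fun l _ => by ring
    rw [hφ, ← Real.exp_add, h3]
    apply Real.exp_le_exp.2
    linarith
  have hφφ : φ w' ⬝ᵥ φ w' ≤ m * Real.exp (-2 * dmin ^ 2) := by
    calc φ w' ⬝ᵥ φ w' ≤ ∑ _i : Fin m, Real.exp (-2 * dmin ^ 2) :=
          Finset.sum_le_sum fun i _ => hφle i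
      _ = _ := by simp
  rw [hσ2]
  generalize φ w' = f at hφφ ⊢
  have key : f ⬝ᵥ (K⁻¹ *ᵥ f) ≤ m * Real.exp (-2 * dmin ^ 2) / lamMin := by
    rw [le_div_iff₀ hpos]
    have hu : K *ᵥ (K⁻¹ *ᵥ f) = f := by
      rw [Matrix.mulVec_mulVec, Matrix.mul_nonsing_inv _ hKpd.det_pos.ne'.isUnit,
        Matrix.one_mulVec]
    have hr := rayleigh_aux K hKpd.1 lamMin hle (K⁻¹ *ᵥ f)
    rw [hu] at hr
    generalize K⁻¹ *ᵥ f = u at *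
    have hs : 0 ≤ (f - lamMin • u) ⬝ᵥ (f - lamMin • u) :=
      Finset.sum_nonneg fun i _ => mul_self_nonneg _
    simp only [sub_dotProduct, dotProduct_sub, smul_dotProduct, dotProduct_smul,
      smul_eq_mul, dotProduct_comm u f] at hs hr
    have := mul_le_mul_of_nonneg_left hr hpos.le
    linarith
  exact mul_le_mul_of_nonneg_left (by linarith) hτ2.le
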